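/- Suppose the distributional preference ≿ satisfies the upper-bound property and the maximizer property, and let π be a priority ranking on 𝒮. If Ch and Ch' are two choice rules, each of which is non-wasteful, promotes the distributional preference, and guarantees no justified envy with respect to π, then Ch(S) = Ch'(S) for every S ⊆ 𝒮. -/

import Mathlib

open Finset

variable {α : Type*}

/-- Strict part of a distributional preference. -/
def strictPref (pref : Finset α → Finset α → Prop) (A B : Finset α) : Prop :=
  pref A B ∧ ¬ pref B A

/-- Indifference part of a distributional preference. -/
def indiffPref (pref : Finset α → Finset α → Prop) (A B : Finset α) : Prop :=
  pref A B ∧ pref B A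

/-- Incomparability under a distributional preference. -/
def incomparable (pref : Finset α → Finset α → Prop) (A B : Finset α) : Prop :=
  ¬ pref A B ∧ ¬ pref B A

/-- `NW q S` is the collection of non-wasteful subsets of `S`. -/
def NW (q : ℕ) (S : Finset α) : Set (Finset α) :=
  {T | T ⊆ S ∧ T.card = min q S.card}

/-- The frontier of `S`: non-wasteful subsets undominated w.r.t. the preference. -/
def frontierSet (pref : Finset α → Finset α → Prop) (q : ℕ) (S : Finset α) :
    Set (Finset α) :=
  {T | T ∈ NW q S ∧ ∀ T' ∈ NW q S, ¬ strictPref pref T' T}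

/-- The upper-bound property of a distributional preference. -/
def upperBoundProperty [DecidableEq α] (pref : Finset α → Finset α → Prop) (q : ℕ) : Prop :=
  ∀ S S' : Finset α, S.card = q → S'.card = q → incomparable pref S S' →
    ∃ S'' ∈ NW q (S ∪ S'), strictPref pref S'' S ∨ strictPref pref S'' S'

/-- The maximizer property of a distributional preference. -/
def maximizerProperty [DecidableEq α] (pref : Finset α → Finset α → Prop) (q : ℕ) : Prop :=
  ∀ S S' : Finset α, S ≠ S' → S.card = q → S'.card = q →
    (∀ S'' ∈ NW q (S ∪ S'), pref S S'' ∧ pref S' S'') →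
    ∃ s ∈ S \ S', ∃ s' ∈ S' \ S,
      indiffPref pref (S.erase s ∪ {s'}) S ∧ indiffPref pref (S'.erase s' ∪ {s}) S'

/-- The improvement property of a distributional preference. -/
def improvementProperty [DecidableEq α] (pref : Finset α → Finset α → Prop) (q : ℕ) : Prop :=
  ∀ S S' : Finset α, S.card = q → S'.card = q → ∀ s ∈ S \ S',
    (∀ S'' ∈ NW q (S ∪ S'), s ∉ S'' → strictPref pref S S'') →
    (∀ S'' ∈ NW q (S ∪ S'), s ∈ S'' → pref S S'') →
    ∃ s' ∈ S' \ S, strictPref pref (S'.erase s' ∪ {s}) S'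

/-- A choice rule is non-wasteful. -/
def nonWasteful (q : ℕ) (Ch : Finset α → Finset α) : Prop :=
  ∀ S : Finset α, (Ch S).card = min q S.card

/-- A choice rule promotes the distributional preference. -/
def promotesPref (pref : Finset α → Finset α → Prop) (Ch : Finset α → Finset α) : Prop :=
  ∀ S : Finset α, ∀ S' ⊆ S, S'.card = (Ch S).card → ¬ strictPref pref S' (Ch S)

/-- A choice rule guarantees no justified envy with respect to priority ranking `π`. -/
def noJustifiedEnvy [DecidableEq α] (pref : Finset α → Finset α → Prop)
    (π : α → α → Prop) (Ch : Finset α → Finset α) : Prop :=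
  ∀ S : Finset α, ∀ s ∈ Ch S, ∀ s' ∈ S \ Ch S,
    pref ((Ch S).erase s ∪ {s'}) (Ch S) → π s s'

/-- Path independence of a choice rule. -/
def pathIndependent [DecidableEq α] (Ch : Finset α → Finset α) : Prop :=
  ∀ S S' : Finset α, Ch (S ∪ S') = Ch (Ch S ∪ S')

/-- Consistency of a choice rule. -/
def consistentRule [DecidableEq α] (Ch : Finset α → Finset α) : Prop :=
  ∀ S : Finset α, ∀ s ∈ S, s ∉ Ch S → Ch (S.erase s) = Ch S

/-- Substitutability of a choice rule. -/
def substitutableRule [DecidableEq α] (Ch : Finset α → Finset α) : Prop :=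
  ∀ S : Finset α, ∀ s ∈ S, ∀ s' ∈ S, s ≠ s' → s ∈ Ch S → s ∈ Ch (S.erase s')

/-- `l` lists the elements of `A` in strictly decreasing `π`-priority. -/
def descList [DecidableEq α] (π : α → α → Prop) (A : Finset α) (l : List α) : Prop :=
  l.Pairwise π ∧ l.Nodup ∧ l.toFinset = A

/-- `A` priority dominates `B` with respect to `π`. -/
def priorityDominates [DecidableEq α] (π : α → α → Prop) (A B : Finset α) : Prop :=
  B.card ≤ A.card ∧
  ∀ la lb : List α, descList π A la → descList π B lb →
    ∀ (k : ℕ) (ha : k < la.length) (hb : k < lb.length),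
      la.get ⟨k, ha⟩ = lb.get ⟨k, hb⟩ ∨ π (la.get ⟨k, ha⟩) (lb.get ⟨k, hb⟩)

/-- The revealed preference axiom for a choice rule: no revealed-priority cycles. -/
def revealedPrefAxiom [DecidableEq α] (pref : Finset α → Finset α → Prop)
    (Ch : Finset α → Finset α) : Prop :=
  ¬ ∃ (K : ℕ) (s : ℕ → α) (T : ℕ → Finset α), 0 < K ∧ s K = s 0 ∧
    ∀ k < K, s k ∈ Ch (T k) ∧ s (k + 1) ∈ T k \ Ch (T k) ∧
      pref ((Ch (T k)).erase (s k) ∪ {s (k + 1)}) (Ch (T k))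

/-!
When `q ≤ |S|`, a frontier set `A` of `S` is weakly preferred to every non-wasteful `T ⊆ S`. If
not, `T` and `A` are incomparable, and as nothing is strictly preferred to `A`, the upper-bound
property gives some non-wasteful `U ≻ T`. Induction downwards along `≻`, on the finite set of
non-wasteful subsets, gives `A ≿ U`, and hence `A ≿ T` after all.

So two distinct frontier sets both maximize the preference, and the maximizer property exchanges
a student `s` of one for a student `s'` of the other with indifference on either side. Absence of
justified envy gives `s π s'` at the first set and `s' π s` at the second, a contradiction.
-/

section NonWasteful

variable {q : ℕ} {S T A : Finset α}

theorem finite_NW (q : ℕ) (S : Finset α) : (NW q S).Finite :=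
  S.powerset.finite_toSet.subset fun _ hT => mem_powerset.2 hT.1

theorem card_eq_of_mem_NW (hS : q ≤ S.card) (hA : A ∈ NW q S) : A.card = q :=
  hA.2.trans (min_eq_left hS)

theorem eq_of_mem_NW_of_card_le (hS : S.card ≤ q) (hA : A ∈ NW q S) : A = S :=
  eq_of_subset_of_card_le hA.1 (hA.2.trans (min_eq_right hS)).ge

theorem NW_union_subset [DecidableEq α] (hA : A ∈ NW q S) (hT : T ⊆ S) :
    NW q (A ∪ T) ⊆ NW q S := by
  rintro U ⟨hU, hUcard⟩
  have hAT : A ∪ T ⊆ S := union_subset hA.1 hT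
  have hcard_le : (A ∪ T).card ≤ S.card := card_le_card hAT
  have hle_card : min q S.card ≤ (A ∪ T).card := hA.2.ge.trans (card_le_card subset_union_left)
  exact ⟨hU.trans hAT, by omega⟩

end NonWasteful

section Frontier

variable {pref : Finset α → Finset α → Prop} {q : ℕ} {S A B T : Finset α}

instance isStrictOrder_strictPref [IsTrans (Finset α) pref] :
    IsStrictOrder (Finset α) (strictPref pref) where
  irrefl _ h := h.2 h.1
  trans _ _ _ hAB hBC :=
    ⟨_root_.trans hAB.1 hBC.1, fun hCA => hBC.2 (_root_.trans hCA hAB.1)⟩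

theorem apply_mem_frontierSet {Ch : Finset α → Finset α} (hsub : Ch S ⊆ S)
    (hnw : nonWasteful q Ch) (hpd : promotesPref pref Ch) : Ch S ∈ frontierSet pref q S :=
  ⟨⟨hsub, hnw S⟩, fun T hT => hpd S T hT.1 (hT.2.trans (hnw S).symm)⟩

variable [DecidableEq α] [IsTrans (Finset α) pref]

theorem pref_of_mem_frontierSet (hub : upperBoundProperty pref q) (hS : q ≤ S.card)
    (hA : A ∈ frontierSet pref q S) (hT : T ∈ NW q S) : pref A T := by
  refine ((finite_NW q S).wellFoundedOn (r := strictPref pref)).induction hT fun T hT ih => ?_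
  by_contra hAT
  have hTA : ¬ pref T A := fun hTA => hA.2 T hT ⟨hTA, hAT⟩
  obtain ⟨U, hU, hdom⟩ :=
    hub A T (card_eq_of_mem_NW hS hA.1) (card_eq_of_mem_NW hS hT) ⟨hAT, hTA⟩
  have hUS : U ∈ NW q S := NW_union_subset hA.1 hT.1 hU
  rcases hdom with hUA | hUT
  · exact hA.2 U hUS hUA
  · have hAU : pref A U := ih U hUS hUT
    exact hAT (_root_.trans hAU hUT.1)

theorem exists_indiffPref_swap_of_mem_frontierSet (hub : upperBoundProperty pref q)
    (hmax : maximizerProperty pref q) (hA : A ∈ frontierSet pref q S)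
    (hB : B ∈ frontierSet pref q S) (hAB : A ≠ B) :
    ∃ s ∈ A \ B, ∃ s' ∈ B \ A,
      indiffPref pref (A.erase s ∪ {s'}) A ∧ indiffPref pref (B.erase s' ∪ {s}) B := by
  have hS : q ≤ S.card := by
    by_contra! hlt
    exact hAB ((eq_of_mem_NW_of_card_le hlt.le hA.1).trans
      (eq_of_mem_NW_of_card_le hlt.le hB.1).symm)
  refine hmax A B hAB (card_eq_of_mem_NW hS hA.1) (card_eq_of_mem_NW hS hB.1) fun U hU => ?_
  have hUS : U ∈ NW q S := NW_union_subset hA.1 hB.1.1 hU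
  exact ⟨pref_of_mem_frontierSet hub hS hA hUS, pref_of_mem_frontierSet hub hS hB hUS⟩

end Frontier

section Envy

variable [DecidableEq α] {pref : Finset α → Finset α → Prop} {π : α → α → Prop} {q : ℕ}
  {S A B : Finset α}

/-- The selection `A` from the applicants `S` is free of justified envy. This is the condition
that `noJustifiedEnvy` imposes on `Ch S`, stated for a single set so that no choice rule is
needed. -/
def envyFree (pref : Finset α → Finset α → Prop) (π : α → α → Prop) (S A : Finset α) : Prop :=
  ∀ s ∈ A, ∀ s' ∈ S \ A, pref (A.erase s ∪ {s'}) A → π s s'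

theorem envyFree.eq_of_mem_frontierSet [IsTrans (Finset α) pref] [Std.Asymm π]
    (hAπ : envyFree pref π S A) (hBπ : envyFree pref π S B) (hub : upperBoundProperty pref q)
    (hmax : maximizerProperty pref q) (hA : A ∈ frontierSet pref q S)
    (hB : B ∈ frontierSet pref q S) : A = B := by
  by_contra hAB
  obtain ⟨s, hs, s', hs', hswapA, hswapB⟩ :=
    exists_indiffPref_swap_of_mem_frontierSet hub hmax hA hB hAB
  have hss' : π s s' :=
    hAπ s (mem_sdiff.1 hs).1 s' (sdiff_subset_sdiff hB.1.1 subset_rfl hs') hswapA.1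
  have hs's : π s' s :=
    hBπ s' (mem_sdiff.1 hs').1 s (sdiff_subset_sdiff hA.1.1 subset_rfl hs) hswapB.1
  exact asymm hss' hs's

end Envy

theorem stmt4_general {α : Type*} [DecidableEq α] {q : ℕ} {pref : Finset α → Finset α → Prop}
    [IsTrans (Finset α) pref] (hub : upperBoundProperty pref q) (hmax : maximizerProperty pref q)
    {π : α → α → Prop} [Std.Asymm π] {Ch Ch' : Finset α → Finset α}
    (hsub : ∀ S : Finset α, Ch S ⊆ S) (hsub' : ∀ S : Finset α, Ch' S ⊆ S)
    (hnw : nonWasteful q Ch) (hpd : promotesPref pref Ch) (hne : noJustifiedEnvy pref π Ch)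
    (hnw' : nonWasteful q Ch') (hpd' : promotesPref pref Ch')
    (hne' : noJustifiedEnvy pref π Ch') (S : Finset α) : Ch S = Ch' S :=
  envyFree.eq_of_mem_frontierSet (hne S) (hne' S) hub hmax
    (apply_mem_frontierSet (hsub S) hnw hpd) (apply_mem_frontierSet (hsub' S) hnw' hpd')

/-- Under the upper-bound and maximizer properties, any two choice
rules that are non-wasteful, promote the distributional preference, and
guarantee no justified envy w.r.t. the priority ranking `π` coincide. -/
theorem stmt4 {α : Type*} [Fintype α] [Nonempty α] [DecidableEq α]
    (q : ℕ) (hq : 0 < q)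
    (pref : Finset α → Finset α → Prop)
    (hrefl : ∀ A : Finset α, pref A A)
    (htrans : ∀ A B C : Finset α, pref A B → pref B C → pref A C)
    (hub : upperBoundProperty pref q)
    (hmax : maximizerProperty pref q)
    (π : α → α → Prop) (hπ : IsStrictTotalOrder α π)
    (Ch Ch' : Finset α → Finset α)
    (hsub : ∀ S : Finset α, Ch S ⊆ S) (hcard : ∀ S : Finset α, (Ch S).card ≤ q)
    (hsub' : ∀ S : Finset α, Ch' S ⊆ S) (hcard' : ∀ S : Finset α, (Ch' S).card ≤ q)
    (hnw : nonWasteful q Ch) (hpd : promotesPref pref Ch)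
    (hne : noJustifiedEnvy pref π Ch)
    (hnw' : nonWasteful q Ch') (hpd' : promotesPref pref Ch')
    (hne' : noJustifiedEnvy pref π Ch') :
    ∀ S : Finset α, Ch S = Ch' S := by
  have : IsTrans (Finset α) pref := ⟨htrans⟩
  exact stmt4_general hub hmax hsub hsub' hnw hpd hne hnw' hpd' hne'
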